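/- Let p be a prime with p ≡ 1 (mod 4), and let α be a real number with 0 < α < 1 such that αp is not an integer. Then the partial sums Σ_{m=1}^{M} (sin(2πmα)/m) · (m/p) converge as M → ∞ to (π/√p) · L(α,p). -/

import Mathlib

open Filter

/-!
The sine series `∑ sin(2πmx)/m` sums to the sawtooth `π (1/2 - fract x)`. Averaging its translates
by `a/N` against an even primitive character `χ` modulo `N` turns the coefficients into
`χ⁻¹(m) sin(2πmx)/m` times the Gauss sum of `χ`, and turns the sawtooth into a sum of `χ(n)` over
`n ≤ xN`, because `⌊x - a/N⌋ + 1` counts the `n` in that range congruent to `a`.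

For the Legendre symbol modulo `p ≡ 1 (mod 4)` the Gauss sum is `√p` up to sign. To find the sign,
write `√p = ζ^t ∏ (1 - ζ^k)` over `1 ≤ k ≤ p/2`, where `ζ = exp(2πi/p)`. If the Gauss sum is `ε`
times this, the corresponding integer polynomial identity holds modulo the cyclotomic polynomial,
which is `(X - 1)^(p-1)` modulo `p`. Comparing terms of order `p/2` at `X = 1` gives
`ε ≡ 1 (mod p)`, by Euler's criterion on one side and Wilson's theorem on the other.
-/

open scoped Finset Nat Real

section Sawtooth

open Complex

lemma cauchySeq_sum_pow_div {w : ℂ} (hw : ‖w‖ ≤ 1) (hw1 : w ≠ 1) :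
    CauchySeq fun M : ℕ => ∑ m ∈ Finset.range M, w ^ (m + 1) / (m + 1) := by
  have geom_bounded (M : ℕ) : ‖∑ m ∈ Finset.range M, w ^ (m + 1)‖ ≤ 2 / ‖w - 1‖ := by
    simp only [pow_succ']
    rw [← Finset.mul_sum, geom_sum_eq hw1, norm_mul, norm_div]
    refine (mul_le_of_le_one_left (by positivity) hw).trans ?_
    gcongr
    calc ‖w ^ M - 1‖ ≤ ‖w ^ M‖ + ‖(1 : ℂ)‖ := norm_sub_le _ _
      _ ≤ 1 + 1 := by
        rw [norm_pow, norm_one]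
        gcongr
        exact pow_le_one₀ (norm_nonneg w) hw
      _ = 2 := by norm_num
  have inv_antitone : Antitone fun m : ℕ => 1 / ((m : ℝ) + 1) := fun a b hab => by
    dsimp only
    gcongr
  have dirichlet_test := inv_antitone.cauchySeq_series_mul_of_tendsto_zero_of_bounded
    tendsto_one_div_add_atTop_nhds_zero_nat geom_bounded
  simpa [div_eq_inv_mul] using dirichlet_test

lemma one_sub_mem_slitPlane {w : ℂ} (hw : ‖w‖ ≤ 1) (hw1 : w ≠ 1) : 1 - w ∈ slitPlane := by
  have re_le : w.re ≤ ‖w‖ := re_le_norm w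
  refine Or.inl ?_
  rw [sub_re, one_re, sub_pos]
  refine lt_of_le_of_ne (re_le.trans hw) fun hre => hw1 ?_
  have norm_eq : ‖w‖ = 1 := le_antisymm hw (hre ▸ re_le)
  rw [eq_coe_norm_of_nonneg (re_eq_norm.mp (hre.trans norm_eq.symm)), norm_eq, ofReal_one]

-- Abel's limit theorem turns convergence on the unit circle into the value of the limit.
lemma tendsto_sum_pow_div_neg_log_one_sub {w : ℂ} (hw : ‖w‖ ≤ 1) (hw1 : w ≠ 1) :
    Tendsto (fun M : ℕ => ∑ m ∈ Finset.range M, w ^ m / m) atTop (nhds (-log (1 - w))) := by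
  obtain ⟨l, hl⟩ := cauchySeq_tendsto_of_complete (cauchySeq_sum_pow_div hw hw1)
  have series_tendsto : Tendsto (fun M : ℕ => ∑ m ∈ Finset.range M, w ^ m / m) atTop (nhds l) := by
    rw [← tendsto_add_atTop_iff_nat 1]
    simpa [Finset.sum_range_succ'] using hl
  have abel := tendsto_map'_iff.mp (tendsto_tsum_powerSeries_nhdsWithin_lt series_tendsto)
  have radial_log : Tendsto (fun r : ℝ => -log (1 - w * r)) (nhdsWithin 1 (Set.Iio 1))
      (nhds (-log (1 - w))) := by
    have : ContinuousAt (fun r : ℝ => -log (1 - w * r)) 1 :=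
      ((by fun_prop : ContinuousAt (fun r : ℝ => 1 - w * r) 1).clog
        (by simpa using one_sub_mem_slitPlane hw hw1)).neg
    simpa using this.tendsto.mono_left nhdsWithin_le_nhds
  have radial_sum : ∀ᶠ r : ℝ in nhdsWithin 1 (Set.Iio 1),
      ∑' m : ℕ, w ^ m / m * (r : ℂ) ^ m = -log (1 - w * r) := by
    filter_upwards [Ioo_mem_nhdsLT (zero_lt_one : (0 : ℝ) < 1)] with r ⟨hr0, hr1⟩
    have norm_lt : ‖w * r‖ < 1 := by
      rw [norm_mul, norm_real, Real.norm_of_nonneg hr0.le]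
      exact (mul_le_of_le_one_left hr0.le hw).trans_lt hr1
    rw [← (hasSum_taylorSeries_neg_log norm_lt).tsum_eq]
    exact tsum_congr fun m => by rw [mul_pow, div_mul_eq_mul_div]
  exact tendsto_nhds_unique (abel.congr' radial_sum) radial_log ▸ series_tendsto

lemma one_sub_exp_two_mul_I (θ : ℝ) :
    1 - exp (2 * θ * I) = (2 * Real.sin θ : ℝ) * exp ((θ - π / 2 : ℝ) * I) := by
  have exp_quarter_turn : exp ((θ - π / 2 : ℝ) * I) = exp (θ * I) * -I := by
    rw [← exp_neg_pi_div_two_mul_I, ← exp_add]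
    push_cast
    ring_nf
  have exp_cancel : exp (-θ * I) * exp (θ * I) = 1 := by
    rw [← exp_add, neg_mul, neg_add_cancel, exp_zero]
  have exp_sq : exp (2 * θ * I) = exp (θ * I) ^ 2 := by
    rw [← exp_nat_mul]
    push_cast
    ring_nf
  rw [exp_quarter_turn, exp_sq, ofReal_mul, ofReal_sin, sin]
  push_cast
  linear_combination I ^ 2 * exp_cancel + (1 - exp (θ * I) ^ 2) * I_sq

lemma arg_one_sub_exp_two_mul_I {θ : ℝ} (h0 : 0 < θ) (hπ : θ < π) :
    arg (1 - exp (2 * θ * I)) = θ - π / 2 := by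
  rw [one_sub_exp_two_mul_I, arg_real_mul _ (by linarith [Real.sin_pos_of_pos_of_lt_pi h0 hπ]),
    arg_exp_mul_I]
  exact (toIocMod_eq_self Real.two_pi_pos).mpr ⟨by linarith, by linarith⟩

theorem tendsto_sum_sin_two_pi_mul_div {x : ℝ} (hx : ∀ k : ℤ, x ≠ k) :
    Tendsto (fun M : ℕ => ∑ m ∈ Finset.Icc 1 M, Real.sin (2 * π * m * x) / m) atTop
      (nhds (π * (1 / 2 - Int.fract x))) := by
  set w : ℂ := exp ((2 * π * x : ℝ) * I) with hw
  have fract_pos : 0 < Int.fract x := (Int.fract_nonneg x).lt_of_ne' fun h =>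
    hx ⌊x⌋ (sub_eq_zero.mp ((Int.self_sub_floor x).trans h))
  have w_eq : w = exp (2 * (π * Int.fract x : ℝ) * I) := by
    rw [← mul_one (exp (2 * _ * I)), ← exp_int_mul_two_pi_mul_I ⌊x⌋, ← exp_add, hw]
    nth_rewrite 1 [← Int.floor_add_fract x]
    push_cast
    ring_nf
  have arg_eq : arg (1 - w) = π * Int.fract x - π / 2 := by
    rw [w_eq]
    exact arg_one_sub_exp_two_mul_I (by positivity) (by nlinarith [Int.fract_lt_one x, Real.pi_pos])
  have w_ne_one : w ≠ 1 := fun h => by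
    obtain ⟨k, hk⟩ := exp_eq_one_iff.mp h
    have him := congrArg im hk
    refine hx k (mul_left_cancel₀ Real.two_pi_pos.ne' ?_)
    simpa [mul_comm] using him
  have h := (continuous_im.tendsto _).comp
    (tendsto_sum_pow_div_neg_log_one_sub (norm_exp_ofReal_mul_I _).le w_ne_one)
  rw [← tendsto_add_atTop_iff_nat 1] at h
  convert h using 2 with M
  · rw [Function.comp_apply, im_sum, Finset.sum_range_eq_add_Ico _ M.add_one_pos,
      Finset.Ico_add_one_right_eq_Icc]
    simp only [Nat.cast_zero, div_zero, zero_im, zero_add]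
    refine Finset.sum_congr rfl fun m _ => ?_
    rw [← exp_nat_mul, show (m * ((2 * π * x : ℝ) * I) : ℂ) = (2 * π * m * x : ℝ) * I by
      push_cast; ring, ← ofReal_natCast, div_ofReal_im, exp_ofReal_mul_I_im]
  · rw [neg_im, log_im, arg_eq]
    ring

end Sawtooth

section ProductEvaluation

open Complex

lemma norm_prod_one_sub_pow_of_isPrimitiveRoot {n : ℕ} {ζ : ℂ}
    (hζ : IsPrimitiveRoot ζ (2 * n + 1)) :
    ‖∏ k ∈ Finset.range n, (1 - ζ ^ (k + 1))‖ = √(2 * n + 1 : ℕ) := by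
  have norm_ζ : ‖ζ‖ = 1 := hζ.norm'_eq_one (by lia)
  have reflect : ∀ k ∈ Finset.range n,
      ‖1 - ζ ^ (n + (n - 1 - k) + 1)‖ = ‖1 - ζ ^ (k + 1)‖ := fun k hk => by
    have exponents : k + 1 + (n + (n - 1 - k) + 1) = 2 * n + 1 := by
      rw [Finset.mem_range] at hk
      lia
    rw [← one_mul ‖1 - ζ ^ (n + _ + 1)‖, ← one_pow (k + 1), ← norm_ζ, ← norm_pow, ← norm_mul,
      mul_sub, mul_one, ← pow_add, exponents, hζ.pow_eq_one, norm_sub_rev]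
  have upper_half : ‖∏ k ∈ Finset.range n, (1 - ζ ^ (n + k + 1))‖ =
      ‖∏ k ∈ Finset.range n, (1 - ζ ^ (k + 1))‖ := by
    rw [norm_prod, norm_prod, ← Finset.prod_range_reflect, Finset.prod_congr rfl reflect]
  rw [eq_comm, Real.sqrt_eq_iff_mul_self_eq (Nat.cast_nonneg _) (norm_nonneg _)]
  nth_rewrite 2 [← upper_half]
  rw [← norm_mul, ← Finset.prod_range_add (fun k => 1 - ζ ^ (k + 1)), ← two_mul,
    hζ.prod_one_sub_pow_eq_order]
  norm_cast

lemma prod_one_sub_exp_two_mul_I {ι : Type*} {s : Finset ι} {θ : ι → ℝ}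
    (hθ : ∀ k ∈ s, 0 < θ k ∧ θ k < π) :
    ∏ k ∈ s, (1 - exp (2 * θ k * I)) =
      ‖∏ k ∈ s, (1 - exp (2 * θ k * I))‖ * exp ((∑ k ∈ s, (θ k - π / 2) : ℝ) * I) := by
  rw [norm_prod, ofReal_prod, ofReal_sum, Finset.sum_mul, exp_sum, ← Finset.prod_mul_distrib]
  refine Finset.prod_congr rfl fun k hk => ?_
  rw [← arg_one_sub_exp_two_mul_I (hθ k hk).1 (hθ k hk).2, norm_mul_exp_arg_mul_I]

lemma sum_range_pi_mul_div_sub_pi_div_two (n : ℕ) :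
    ∑ k ∈ Finset.range (2 * n), (π * (k + 1) / (4 * n + 1) - π / 2) =
      -(2 * π / (4 * n + 1) * n ^ 2) := by
  have sum_add_one : ∑ k ∈ Finset.range (2 * n), (k + 1 : ℝ) = n * (2 * n + 1) := by
    have gauss := Finset.sum_range_id_mul_two (2 * n + 1)
    rw [Finset.sum_range_succ'] at gauss
    have gauss_real := congrArg (Nat.cast : ℕ → ℝ) gauss
    push_cast at gauss_real
    linarith
  rw [Finset.sum_sub_distrib, ← Finset.sum_div, ← Finset.mul_sum, sum_add_one, Finset.sum_const,
    Finset.card_range, nsmul_eq_mul]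
  push_cast
  field_simp
  ring

lemma exp_pow_mul_prod_one_sub_exp_pow (n : ℕ) :
    exp (2 * π * I / (4 * n + 1 : ℕ)) ^ n ^ 2 *
      ∏ k ∈ Finset.range (2 * n), (1 - exp (2 * π * I / (4 * n + 1 : ℕ)) ^ (k + 1)) =
        √(4 * n + 1 : ℕ) := by
  have hζ : IsPrimitiveRoot (exp (2 * π * I / (4 * n + 1 : ℕ))) (2 * (2 * n) + 1) := by
    rw [← mul_assoc]
    exact isPrimitiveRoot_exp (4 * n + 1) (Nat.succ_ne_zero _)
  have norm_eq := norm_prod_one_sub_pow_of_isPrimitiveRoot hζ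
  have angle_mem : ∀ k ∈ Finset.range (2 * n),
      0 < π * (k + 1) / (4 * n + 1) ∧ π * (k + 1) / (4 * n + 1) < π := fun k hk => by
    rw [Finset.mem_range] at hk
    have lt_N : (k : ℝ) + 1 < 4 * n + 1 := by exact_mod_cast show k + 1 < 4 * n + 1 by lia
    refine ⟨by positivity, ?_⟩
    rw [div_lt_iff₀ (by positivity)]
    gcongr
  have ζ_pow (k : ℕ) : exp (2 * π * I / (4 * n + 1 : ℕ)) ^ (k + 1) =
      exp (2 * (π * (k + 1) / (4 * n + 1) : ℝ) * I) := by
    rw [← exp_nat_mul]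
    push_cast
    ring_nf
  simp only [ζ_pow] at norm_eq ⊢
  have exponents_cancel : ((n ^ 2 : ℕ) : ℂ) * (2 * π * I / (4 * n + 1 : ℕ)) +
      (-(2 * π / (4 * n + 1) * n ^ 2) : ℝ) * I = 0 := by
    push_cast
    ring
  rw [prod_one_sub_exp_two_mul_I angle_mem, norm_eq, sum_range_pi_mul_div_sub_pi_div_two,
    mul_left_comm, ← exp_nat_mul, ← exp_add, exponents_cancel, exp_zero, mul_one,
    show 2 * (2 * n) = 4 * n by ring]

end ProductEvaluation

section GaussSumSign

open Polynomial

/-- The Euler operator `f ↦ X * f'`, which multiplies `X ^ j` by `j`; its powers extract leading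
terms at `1` without producing the lower-order terms of `derivative ^ m`. -/
noncomputable def eulerOperator (R : Type*) [CommRing R] : R[X] →ₗ[R] R[X] :=
  LinearMap.mulLeft R X ∘ₗ derivative

lemma eulerOperator_apply {R : Type*} [CommRing R] (f : R[X]) :
    eulerOperator R f = X * derivative f :=
  rfl

lemma eulerOperator_pow_X_pow {R : Type*} [CommRing R] (m j : ℕ) :
    (eulerOperator R ^ m) (X ^ j) = (j : R) ^ m • X ^ j := by
  induction m with
  | zero => simp
  | succ m ih =>
    rw [pow_succ', Module.End.mul_apply, ih, map_smul, eulerOperator_apply, derivative_X_pow,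
      pow_succ, mul_smul]
    cases j with
    | zero => simp
    | succ j =>
      rw [Nat.add_sub_cancel, smul_eq_C_mul ((j + 1 : ℕ) : R), mul_left_comm, pow_succ']

lemma eval_one_eulerOperator_pow_mul {R : Type*} [CommRing R] (m : ℕ) (g : R[X]) :
    ((eulerOperator R ^ m) ((X - 1) ^ m * g)).eval 1 = (m ! : R) * g.eval 1 := by
  induction m generalizing g with
  | zero => simp
  | succ m ih =>
    have euler_mul : eulerOperator R ((X - 1) ^ (m + 1) * g) =
        (X - 1) ^ m * ((m + 1 : R[X]) * X * g + (X - 1) * X * derivative g) := by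
      rw [eulerOperator_apply, derivative_mul, derivative_pow]
      simp
      ring
    rw [pow_succ, Module.End.mul_apply, euler_mul, ih, Nat.factorial_succ]
    simp
    ring

lemma eval_one_eulerOperator_pow_map_of_aeval_eq_zero {K : Type*} [Field K] [CharZero K] {p : ℕ}
    [hp : Fact p.Prime] {ζ : K} (hζ : IsPrimitiveRoot ζ p) {F : ℤ[X]} (hF : aeval ζ F = 0) {m : ℕ}
    (hm : m < p - 1) :
    ((eulerOperator (ZMod p) ^ m) (F.map (Int.castRingHom (ZMod p)))).eval 1 = 0 := by
  have cyclotomic_dvd : cyclotomic p ℤ ∣ F := by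
    rw [cyclotomic_eq_minpoly hζ hp.out.pos]
    exact minpoly.isIntegrallyClosed_dvd (hζ.isIntegral hp.out.pos) hF
  have cyclotomic_mod_p : cyclotomic p (ZMod p) = (X - 1) ^ (p - 1) := by
    simpa using
      cyclotomic_mul_prime_eq_pow_of_not_dvd (ZMod p) (p := p) (n := 1) hp.out.not_dvd_one
  obtain ⟨g, hg⟩ := Polynomial.map_dvd (Int.castRingHom (ZMod p)) cyclotomic_dvd
  rw [hg, map_cyclotomic, cyclotomic_mod_p, ← Nat.add_sub_cancel' hm.le, pow_add, mul_assoc,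
    eval_one_eulerOperator_pow_mul]
  simp [Nat.sub_ne_zero_of_lt hm]

lemma neg_one_pow_mul_factorial_half_sq {p : ℕ} [hp : Fact p.Prime] (hp2 : p ≠ 2) :
    (-1) ^ (p / 2) * ((p / 2)! : ZMod p) ^ 2 = -1 := by
  have hodd := hp.out.mod_two_eq_one_iff_ne_two.mpr hp2
  have reflect : ∀ k ∈ Finset.range (p / 2),
      ((p / 2 + 1 + (p / 2 - 1 - k) : ℕ) : ZMod p) = -1 * ((k + 1 : ℕ) : ZMod p) := by
    intro k hk
    rw [Finset.mem_range] at hk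
    rw [neg_one_mul, eq_neg_iff_add_eq_zero, ← Nat.cast_add, ZMod.natCast_eq_zero_iff]
    exact dvd_of_eq (by lia)
  have upper_half : ((p / 2 + 1).ascFactorial (p / 2) : ZMod p) =
      (-1) ^ (p / 2) * ((p / 2)! : ZMod p) := by
    rw [Nat.ascFactorial_eq_prod_range, Nat.cast_prod, ← Finset.prod_range_reflect,
      Finset.prod_congr rfl reflect, Finset.prod_mul_distrib, Finset.prod_const, Finset.card_range,
      ← Nat.cast_prod, Finset.prod_range_add_one_eq_factorial]
  calc (-1) ^ (p / 2) * ((p / 2)! : ZMod p) ^ 2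
      = (((p / 2)! * (p / 2 + 1).ascFactorial (p / 2) : ℕ) : ZMod p) := by
        rw [Nat.cast_mul, upper_half]; ring
    _ = ((p - 1)! : ZMod p) := by
        rw [Nat.factorial_mul_ascFactorial, show p / 2 + p / 2 = p - 1 by lia]
    _ = -1 := ZMod.wilsons_lemma p

lemma eval_one_eulerOperator_pow_prod_one_sub_X_pow {R : Type*} [CommRing R] (m N : ℕ) :
    ((eulerOperator R ^ m) (X ^ N * ∏ k ∈ Finset.range m, (1 - X ^ (k + 1)))).eval 1 =
      (-1) ^ m * (m ! : R) ^ 2 := by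
  have factor : ∏ k ∈ Finset.range m, ((1 : R[X]) - X ^ (k + 1)) =
      (X - 1) ^ m * ((-1) ^ m * ∏ k ∈ Finset.range m, ∑ i ∈ Finset.range (k + 1), X ^ i) := by
    rw [← mul_assoc, ← mul_pow, ← Finset.card_range m, ← Finset.prod_const, Finset.card_range,
      ← Finset.prod_mul_distrib]
    refine Finset.prod_congr rfl fun k _ => ?_
    rw [mul_assoc, neg_one_mul, mul_neg, mul_geom_sum, neg_sub]
  rw [factor, mul_left_comm, eval_one_eulerOperator_pow_mul]
  simp only [eval_mul, eval_pow, eval_X, one_pow, eval_neg, eval_one, eval_prod, eval_geom_sum,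
    Finset.sum_const, Finset.card_range, nsmul_one, ← Nat.cast_prod,
    Finset.prod_range_add_one_eq_factorial]
  ring

lemma eval_one_eulerOperator_pow_sum_quadraticChar {p : ℕ} [hp : Fact p.Prime] (hp2 : p ≠ 2) :
    ((eulerOperator (ZMod p) ^ (p / 2))
      (∑ a : ZMod p, (quadraticChar (ZMod p) a : ZMod p) • X ^ a.val)).eval 1 = -1 := by
  have hodd := hp.out.mod_two_eq_one_iff_ne_two.mpr hp2
  have euler_criterion (a : ZMod p) :
      (quadraticChar (ZMod p) a : ZMod p) * a ^ (p / 2) = a ^ (p - 1) := by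
    rw [quadraticChar_eq_pow_of_char_ne_two' (by rwa [ZMod.ringChar_zmod_n]), ZMod.card, ← pow_add]
    congr 1
    lia
  have fermat (a : ZMod p) : a ^ (p - 1) = 1 - if a = 0 then 1 else 0 := by
    split_ifs with ha
    · simp [ha, Nat.sub_ne_zero_of_lt hp.out.one_lt]
    · rw [ZMod.pow_card_sub_one_eq_one ha, sub_zero]
  simp only [map_sum, map_smul, eulerOperator_pow_X_pow, eval_finsetSum, eval_smul, eval_pow,
    eval_X, one_pow, smul_eq_mul, mul_one, ZMod.natCast_zmod_val, euler_criterion, fermat]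
  simp

lemma gaussSum_sign_eq_one {K : Type*} [Field K] [CharZero K] {p : ℕ} [hp : Fact p.Prime]
    (hp2 : p ≠ 2) {ζ : K} (hζ : IsPrimitiveRoot ζ p) {ε : ℤ} {N : ℕ}
    (h : ∑ a : ZMod p, (quadraticChar (ZMod p) a : K) * ζ ^ a.val =
      ε * (ζ ^ N * ∏ k ∈ Finset.range (p / 2), (1 - ζ ^ (k + 1)))) :
    (ε : ZMod p) = 1 := by
  have hp3 : 2 < p := lt_of_le_of_ne hp.out.two_le hp2.symm
  let F : ℤ[X] := ∑ a : ZMod p, quadraticChar (ZMod p) a • X ^ a.val -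
    ε • (X ^ N * ∏ k ∈ Finset.range (p / 2), (1 - X ^ (k + 1)))
  have hF : aeval ζ F = 0 := by
    simp [F, h, -quadraticChar_apply]
  have := eval_one_eulerOperator_pow_map_of_aeval_eq_zero hζ hF (m := p / 2) (by lia)
  have map_F : F.map (Int.castRingHom (ZMod p)) =
      ∑ a : ZMod p, (quadraticChar (ZMod p) a : ZMod p) • X ^ a.val -
        (ε : ZMod p) • (X ^ N * ∏ k ∈ Finset.range (p / 2), (1 - X ^ (k + 1))) := by
    simp [F, Polynomial.map_sum, Polynomial.map_prod, smul_eq_C_mul, -quadraticChar_apply]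
  rw [map_F, map_sub, eval_sub, eval_one_eulerOperator_pow_sum_quadraticChar hp2, map_smul,
    eval_smul, eval_one_eulerOperator_pow_prod_one_sub_X_pow,
    neg_one_pow_mul_factorial_half_sq hp2, smul_eq_mul] at this
  linear_combination this

end GaussSumSign

section LegendreCharacter

variable {p : ℕ} [hp : Fact p.Prime]

/-- The Legendre symbol modulo `p` as a complex Dirichlet character. -/
noncomputable def legendreCharacter (p : ℕ) [Fact p.Prime] : DirichletCharacter ℂ p :=
  (quadraticChar (ZMod p)).ringHomComp (Int.castRingHom ℂ)

lemma legendreCharacter_apply (a : ZMod p) :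
    legendreCharacter p a = (quadraticChar (ZMod p) a : ℂ) :=
  rfl

lemma legendreCharacter_natCast (n : ℕ) : legendreCharacter p n = (legendreSym p n : ℂ) := by
  rw [legendreCharacter_apply, legendreSym, Int.cast_natCast]

lemma legendreCharacter_isQuadratic : (legendreCharacter p).IsQuadratic :=
  (quadraticChar_isQuadratic (ZMod p)).comp _

lemma legendreCharacter_ne_one (hp2 : p ≠ 2) : legendreCharacter p ≠ 1 :=
  (MulChar.ringHomComp_ne_one_iff (RingHom.injective_int _)).mpr
    (quadraticChar_ne_one (by rwa [ZMod.ringChar_zmod_n]))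

lemma legendreCharacter_even (hp4 : p % 4 = 1) : (legendreCharacter p).Even := by
  have hp2 : ringChar (ZMod p) ≠ 2 := by
    rw [ZMod.ringChar_zmod_n]
    lia
  rw [DirichletCharacter.Even, legendreCharacter_apply, quadraticChar_neg_one hp2, ZMod.card,
    ZMod.χ₄_nat_one_mod_four hp4, Int.cast_one]

lemma isPrimitive_of_ne_one_of_prime {R : Type*} [CommMonoidWithZero R]
    {χ : DirichletCharacter R p} (hχ : χ ≠ 1) : χ.IsPrimitive :=
  (hp.out.eq_one_or_self_of_dvd _ χ.conductor_dvd_level).resolve_left fun h =>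
    hχ (DirichletCharacter.eq_one_iff_conductor_eq_one.mpr h)

lemma stdAddChar_eq_exp_pow_val {N : ℕ} [NeZero N] (a : ZMod N) :
    ZMod.stdAddChar a = Complex.exp (2 * π * Complex.I / N) ^ a.val := by
  rw [ZMod.stdAddChar_apply, ZMod.toCircle_apply, ← Complex.exp_nat_mul]
  ring_nf

theorem gaussSum_legendreCharacter (hp4 : p % 4 = 1) :
    gaussSum (legendreCharacter p) ZMod.stdAddChar = (√p : ℂ) := by
  have hp2 : p ≠ 2 := by lia
  have sq_eq : gaussSum (legendreCharacter p) ZMod.stdAddChar ^ 2 = (√p : ℂ) ^ 2 := by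
    have apply_neg_one : legendreCharacter p (-1) = 1 := legendreCharacter_even hp4
    rw [gaussSum_sq (χ := legendreCharacter p) (legendreCharacter_ne_one hp2)
      legendreCharacter_isQuadratic (ZMod.isPrimitive_stdAddChar p), apply_neg_one, one_mul,
      ZMod.card]
    norm_cast
    rw [Real.sq_sqrt p.cast_nonneg]
  refine (sq_eq_sq_iff_eq_or_eq_neg.mp sq_eq).resolve_right fun neg => ?_
  have product := exp_pow_mul_prod_one_sub_exp_pow (p / 4)
  rw [show 4 * (p / 4) + 1 = p by lia, show 2 * (p / 4) = p / 2 by lia] at product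
  have sign := gaussSum_sign_eq_one hp2 (Complex.isPrimitiveRoot_exp p hp.out.ne_zero)
    (ε := -1) (N := (p / 4) ^ 2) <| by
      rw [product, Int.cast_neg, Int.cast_one, neg_one_mul, ← neg, gaussSum]
      simp only [legendreCharacter_apply, stdAddChar_eq_exp_pow_val]
  have : Fact (2 < p) := ⟨hp.out.two_le.lt_of_ne' hp2⟩
  exact ZMod.neg_one_ne_one (by simpa using sign)

end LegendreCharacter

section CharacterSums

lemma even_inv_of_even {K : Type*} [Field K] {N : ℕ} {χ : DirichletCharacter K N}
    (even : χ.Even) : χ⁻¹.Even := by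
  rw [DirichletCharacter.Even, MulChar.inv_apply_eq_inv', even, inv_one]

lemma dirichletCharacter_apply_zero_of_ne_one {R : Type*} [CommMonoidWithZero R] {N : ℕ}
    {χ : DirichletCharacter R N} (ne_one : χ ≠ 1) : χ 0 = 0 :=
  χ.map_zero' fun h => ne_one (χ.level_one' h)

lemma sum_dirichletCharacter_mul_val_eq_zero {R : Type*} [CommRing R] [IsDomain R] [CharZero R]
    {N : ℕ} [NeZero N] {χ : DirichletCharacter R N} (even : χ.Even) (ne_one : χ ≠ 1) :
    ∑ a : ZMod N, χ a * a.val = 0 := by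
  have reflect : ∑ a : ZMod N, χ a * a.val = ∑ a : ZMod N, χ a * (-a).val :=
    Fintype.sum_equiv (Equiv.neg _) _ _ fun a => by
      rw [Equiv.neg_apply, neg_neg, even.eval_neg]
  have add_reflect (a : ZMod N) : χ a * a.val + χ a * (-a).val = χ a * N := by
    rcases eq_or_ne a 0 with rfl | ha
    · simp [dirichletCharacter_apply_zero_of_ne_one ne_one]
    · rw [ZMod.neg_val, if_neg ha, Nat.cast_sub a.val_le]
      ring
  have double : ∑ a : ZMod N, χ a * a.val + ∑ a : ZMod N, χ a * a.val = 0 := by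
    nth_rewrite 2 [reflect]
    rw [← Finset.sum_add_distrib, Finset.sum_congr rfl fun a _ => add_reflect a, ← Finset.sum_mul,
      MulChar.sum_eq_zero_of_ne_one ne_one, zero_mul]
  simpa using double

lemma card_filter_Icc_natCast_eq {N : ℕ} [NeZero N] (n : ℕ) {a : ZMod N} (ha : a ≠ 0) :
    (#{k ∈ Finset.Icc 1 n | ((k : ℕ) : ZMod N) = a} : ℤ) = (n - a.val) / N + 1 := by
  have hN : (0 : ℤ) < N := Int.natCast_pos.mpr (NeZero.pos N)
  have val_pos : (0 : ℤ) < a.val := Int.natCast_pos.mpr (ZMod.val_pos.mpr ha)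
  have val_lt : (a.val : ℤ) < N := Int.ofNat_lt.mpr a.val_lt
  have natCast_eq_iff (k : ℕ) : (k : ZMod N) = a ↔ k ≡ a.val [MOD N] := by
    rw [← ZMod.natCast_eq_natCast_iff, ZMod.natCast_zmod_val]
  have rat_floor (b : ℕ) : ⌊((b : ℚ) - a.val) / N⌋ = (b - a.val : ℤ) / N := by
    exact_mod_cast Rat.floor_intCast_div_natCast (b - a.val) N
  have lower : ((0 : ℕ) - a.val : ℤ) / N = -1 :=
    Int.ediv_eq_neg_one_of_neg_of_le (by lia) (by lia)
  have upper : -1 ≤ (n - a.val : ℤ) / N := by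
    rw [Int.le_ediv_iff_mul_le hN]
    lia
  simp only [natCast_eq_iff]
  rw [← zero_add 1, Finset.Icc_add_one_left_eq_Ioc, Nat.Ioc_filter_modEq_card 0 _ (NeZero.pos N),
    rat_floor, rat_floor, lower]
  lia

lemma floor_sub_natCast_div {x : ℝ} (hx : 0 ≤ x) (v N : ℕ) [NeZero N] :
    ⌊x - v / N⌋ = (⌊x * N⌋₊ - v : ℤ) / N := by
  have hN : (N : ℝ) ≠ 0 := NeZero.ne _
  rw [Int.natCast_floor_eq_floor (by positivity), ← Int.floor_sub_natCast, ← Int.floor_div_natCast]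
  congr 1
  field_simp

end CharacterSums

section EvenPrimitiveCharacter

open Complex

variable {N : ℕ} [NeZero N] {χ : DirichletCharacter ℂ N}

lemma stdAddChar_mulShift_intCast (m : ℤ) (a : ZMod N) :
    (ZMod.stdAddChar (N := N)).mulShift m a = exp (2 * π * m * (a.val / N : ℝ) * I) := by
  have coe_eq : (m : ZMod N) * a = (m * a.val : ℤ) := by
    rw [Int.cast_mul, Int.cast_natCast, ZMod.natCast_zmod_val]
  rw [AddChar.mulShift_apply, coe_eq, ZMod.stdAddChar_coe]
  push_cast
  ring_nf

lemma sum_dirichletCharacter_mul_exp (primitive : χ.IsPrimitive) (x : ℝ) (m : ℤ) :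
    ∑ a : ZMod N, χ a * exp (2 * π * m * (x - a.val / N : ℝ) * I) =
      gaussSum χ ZMod.stdAddChar * (exp (2 * π * m * x * I) * χ⁻¹ (-m)) := by
  rw [mul_left_comm, mul_comm (gaussSum _ _), ← gaussSum_mulShift_of_isPrimitive _ primitive,
    gaussSum, Finset.mul_sum, ← Int.cast_neg]
  refine Finset.sum_congr rfl fun a _ => ?_
  rw [stdAddChar_mulShift_intCast, mul_left_comm, ← exp_add]
  push_cast
  ring_nf

lemma sum_dirichletCharacter_mul_sin (primitive : χ.IsPrimitive) (even : χ.Even) (x : ℝ) (m : ℕ) :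
    ∑ a : ZMod N, χ a * Real.sin (2 * π * m * (x - a.val / N)) =
      gaussSum χ ZMod.stdAddChar * (Real.sin (2 * π * m * x) * χ⁻¹ m) := by
  have pos := sum_dirichletCharacter_mul_exp primitive x m
  have neg := sum_dirichletCharacter_mul_exp primitive x (-m)
  have sin_eq (y : ℝ) : (Real.sin (2 * π * m * y) : ℂ) =
      I / 2 * (exp (2 * π * (-m : ℤ) * y * I) - exp (2 * π * (m : ℤ) * y * I)) := by
    rw [ofReal_sin, sin]
    push_cast
    ring_nf
  calc ∑ a : ZMod N, χ a * Real.sin (2 * π * m * (x - a.val / N))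
      = I / 2 * (∑ a : ZMod N, χ a * exp (2 * π * (-m : ℤ) * (x - a.val / N : ℝ) * I) -
          ∑ a : ZMod N, χ a * exp (2 * π * (m : ℤ) * (x - a.val / N : ℝ) * I)) := by
        simp only [sin_eq, mul_left_comm (χ _) (I / 2), ← Finset.mul_sum, mul_sub (χ _),
          Finset.sum_sub_distrib]
    _ = gaussSum χ ZMod.stdAddChar * (Real.sin (2 * π * m * x) * χ⁻¹ m) := by
        rw [pos, neg, (even_inv_of_even even).eval_neg, (even_inv_of_even even).eval_neg, sin_eq,
          Int.cast_neg (R := ZMod N), (even_inv_of_even even).eval_neg, Int.cast_natCast]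
        ring

lemma sum_dirichletCharacter_mul_half_sub_fract (even : χ.Even) (ne_one : χ ≠ 1) {x : ℝ}
    (hx : 0 ≤ x) :
    ∑ a : ZMod N, χ a * (1 / 2 - Int.fract (x - a.val / N) : ℝ) =
      ∑ n ∈ Finset.Icc 1 ⌊x * N⌋₊, χ n := by
  have sum_zero : ∑ a, χ a = 0 := MulChar.sum_eq_zero_of_ne_one ne_one
  have fract_eq (a : ZMod N) : χ a * (1 / 2 - Int.fract (x - a.val / N) : ℝ) =
      χ a * (⌊x - a.val / N⌋ + 1 : ℤ) - χ a * (x + 1 / 2) + χ a * a.val / N := by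
    rw [Int.fract]
    push_cast
    ring
  have fiber (a : ZMod N) : χ a * (⌊x - a.val / N⌋ + 1 : ℤ) =
      ∑ n ∈ Finset.Icc 1 ⌊x * N⌋₊ with ((n : ℕ) : ZMod N) = a, χ n := by
    rw [Finset.sum_congr rfl fun n hn => by rw [(Finset.mem_filter.mp hn).2], Finset.sum_const,
      nsmul_eq_mul']
    rcases eq_or_ne a 0 with rfl | ha
    · simp only [dirichletCharacter_apply_zero_of_ne_one ne_one, zero_mul]
    · rw [floor_sub_natCast_div hx, ← card_filter_Icc_natCast_eq _ ha, Int.cast_natCast]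
  simp only [fract_eq, Finset.sum_add_distrib, Finset.sum_sub_distrib, ← Finset.sum_mul,
    ← Finset.sum_div, sum_zero, sum_dirichletCharacter_mul_val_eq_zero even ne_one, fiber,
    Finset.sum_fiberwise, zero_mul, zero_div, sub_zero, add_zero]

theorem tendsto_gaussSum_mul_sum_sin_div_mul_inv (primitive : χ.IsPrimitive) (even : χ.Even)
    (ne_one : χ ≠ 1) {x : ℝ} (hx : 0 ≤ x) (hxN : ∀ k : ℤ, x * N ≠ k) :
    Tendsto (fun M : ℕ => gaussSum χ ZMod.stdAddChar *
        ∑ m ∈ Finset.Icc 1 M, (Real.sin (2 * π * m * x) / m : ℝ) * χ⁻¹ m) atTop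
      (nhds (π * ∑ n ∈ Finset.Icc 1 ⌊x * N⌋₊, χ n)) := by
  have N_ne_zero : (N : ℝ) ≠ 0 := NeZero.ne _
  have not_int (a : ZMod N) (k : ℤ) : x - a.val / N ≠ k := fun h => hxN (k * N + a.val) <| by
    rw [sub_eq_iff_eq_add.mp h]
    push_cast
    field_simp
  have sawtooth (a : ZMod N) := ((continuous_ofReal.tendsto _).comp
    (tendsto_sum_sin_two_pi_mul_div (not_int a))).const_mul (χ a)
  have h := tendsto_finsetSum Finset.univ fun a _ => sawtooth a
  convert h using 2 with M
  · simp only [Function.comp_apply, ofReal_sum, Finset.mul_sum]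
    rw [Finset.sum_comm]
    refine Finset.sum_congr rfl fun m _ => ?_
    simp only [ofReal_div, ← mul_div_assoc]
    rw [← Finset.sum_div, sum_dirichletCharacter_mul_sin primitive even]
    ring
  · rw [← sum_dirichletCharacter_mul_half_sub_fract even ne_one hx, Finset.mul_sum]
    refine Finset.sum_congr rfl fun a _ => ?_
    push_cast
    ring

end EvenPrimitiveCharacter

theorem stmt_5_general (p : ℕ) [Fact p.Prime] (hp4 : p % 4 = 1) (α : ℝ) (h0 : 0 < α)
    (hint : ∀ k : ℤ, α * (p : ℝ) ≠ (k : ℝ)) :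
    Tendsto (fun M : ℕ =>
        ∑ m ∈ Finset.Icc 1 M,
          Real.sin (2 * Real.pi * (m : ℝ) * α) / (m : ℝ) *
            (legendreSym p (m : ℤ) : ℝ))
      atTop
      (nhds (Real.pi / Real.sqrt p *
        ((∑ n ∈ Finset.Icc 1 ⌊α * (p : ℝ)⌋₊, legendreSym p (n : ℤ) : ℤ) : ℝ))) := by
  have hp2 : p ≠ 2 := by lia
  have sqrt_ne_zero : (√p : ℂ) ≠ 0 := by
    exact_mod_cast (Real.sqrt_pos.mpr (Nat.cast_pos.mpr (NeZero.pos p))).ne'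
  have ne_one := legendreCharacter_ne_one hp2
  have h := (tendsto_gaussSum_mul_sum_sin_div_mul_inv (isPrimitive_of_ne_one_of_prime ne_one)
    (legendreCharacter_even hp4) ne_one h0.le hint).div_const (√p : ℂ)
  simp only [gaussSum_legendreCharacter hp4, legendreCharacter_isQuadratic.inv,
    legendreCharacter_natCast, mul_div_cancel_left₀ _ sqrt_ne_zero] at h
  rw [← tendsto_ofReal_iff]
  convert h using 2
  · push_cast
    rfl
  · push_cast
    ring

/-- For a prime `p ≡ 1 (mod 4)` and `0 < α < 1` with `αp ∉ ℤ`, the partial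
sums `∑_{m=1}^{M} (sin(2πmα)/m) (m/p)` converge to `(π/√p) · L(α,p)`, where
`L(α,p) = ∑_{n=1}^{⌊αp⌋} (n/p)`. -/
theorem stmt_5 (p : ℕ) [Fact p.Prime] (hp4 : p % 4 = 1) (α : ℝ) (h0 : 0 < α)
    (h1 : α < 1) (hint : ∀ k : ℤ, α * (p : ℝ) ≠ (k : ℝ)) :
    Tendsto (fun M : ℕ =>
        ∑ m ∈ Finset.Icc 1 M,
          Real.sin (2 * Real.pi * (m : ℝ) * α) / (m : ℝ) *
            (legendreSym p (m : ℤ) : ℝ))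
      atTop
      (nhds (Real.pi / Real.sqrt p *
        ((∑ n ∈ Finset.Icc 1 ⌊α * (p : ℝ)⌋₊, legendreSym p (n : ℤ) : ℤ) : ℝ))) :=
  stmt_5_general p hp4 α h0 hint
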